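/- arXiv:2008.10430 — 2 statements merged into one kernel-verified Lean document; each statement's English description precedes it below -/
import Mathlib

section
/- Fix α ∈ [0,1]. (1) If G₁ and G₂ are A_α-cospectral regular graphs and H is an arbitrary graph, then the R-vertex joins G₁⟨v⟩H and G₂⟨v⟩H are A_α-cospectral. (2) If H₁ and H₂ are A_α-cospectral graphs with equal A_α-coronals Γ_{A_α(H₁)}(x) = Γ_{A_α(H₂)}(x), and G is a regular graph, then G⟨v⟩H₁ and G⟨v⟩H₂ are A_α-cospectral. -/
open Matrix Polynomial
open scoped Classical

noncomputable section

/-- `A_α(G) = α·D(G) + (1-α)·A(G)`, where `D(G)` is the diagonal degree matrix and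
`A(G)` the adjacency matrix. -/
def Aalpha {V : Type*} [Fintype V] (G : SimpleGraph V) (α : ℝ) : Matrix V V ℝ :=
  α • Matrix.diagonal (fun v => (G.degree v : ℝ)) + (1 - α) • G.adjMatrix ℝ

/-- The `M`-coronal `Γ_M(x) = 1ᵀ (xI − M)⁻¹ 1`, i.e. the sum of the entries of
`(xI − M)⁻¹`. -/
def coronal {n : Type*} [Fintype n] (M : Matrix n n ℝ) (x : ℝ) : ℝ :=
  ∑ i, ∑ j, (x • (1 : Matrix n n ℝ) - M)⁻¹ i j

/-- The `R`-vertex join `G₁⟨v⟩G₂`: take the `R`-graph `R(G₁)` (for each edge of `G₁` a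
new vertex joined to both of its endpoints) together with `G₂`, and join every original
vertex of `G₁` with every vertex of `G₂`. -/
def rVertexJoin {V₁ V₂ : Type*} (G₁ : SimpleGraph V₁) (G₂ : SimpleGraph V₂) :
    SimpleGraph (V₁ ⊕ (↥G₁.edgeSet ⊕ V₂)) :=
  SimpleGraph.fromRel fun a b =>
    match a, b with
    | Sum.inl v, Sum.inl w => G₁.Adj v w
    | Sum.inl v, Sum.inr (Sum.inl e) => v ∈ (e : Sym2 V₁)
    | Sum.inl _, Sum.inr (Sum.inr _) => True
    | Sum.inr (Sum.inr u), Sum.inr (Sum.inr w) => G₂.Adj u w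
    | _, _ => False

theorem charpoly_add_smul_allOnes {n : Type*} [Fintype n] [DecidableEq n] (M : Matrix n n ℝ)
    (r c : ℝ) (hM : ∀ i, ∑ j, M i j = r) :
    (X - C r) * (M + c • (Matrix.of fun _ _ => 1)).charpoly =
      (X - C (r + Fintype.card n * c)) * M.charpoly := by
  refine Polynomial.eq_of_infinite_eval_eq _ _ ((Set.Ioi_infinite r).mono fun x hx => ?_)
  have hx' : x - r ≠ 0 := sub_ne_zero.2 (ne_of_gt hx)
  have hfac : Matrix.scalar n x - (M + c • (Matrix.of fun _ _ => 1)) =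
      (Matrix.scalar n x - M) * (1 + Matrix.replicateCol Unit (fun _ : n => -c / (x - r)) *
        Matrix.replicateRow Unit (fun _ : n => (1 : ℝ))) := by
    ext i j
    have hs : ∑ k, (Matrix.scalar n x - M) i k * (-c / (x - r)) = -c := by
      rw [← Finset.sum_mul]
      simp only [Matrix.sub_apply, Finset.sum_sub_distrib, hM, Matrix.scalar_apply,
        Matrix.diagonal_apply, Finset.sum_ite_eq, Finset.mem_univ, if_true]
      field_simp
    rw [Matrix.mul_add, Matrix.mul_one, Matrix.add_apply, Matrix.mul_apply]
    simp only [Matrix.mul_apply, Matrix.replicateCol_apply, Matrix.replicateRow_apply, mul_one,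
      Finset.univ_unique, Finset.sum_singleton]
    rw [hs]
    simp only [Matrix.sub_apply, Matrix.add_apply, Matrix.smul_apply, Matrix.of_apply, smul_eq_mul]
    ring
  rw [Set.mem_ofPred_eq]
  simp only [eval_mul, eval_sub, eval_X, eval_C, Matrix.eval_charpoly]
  rw [hfac, Matrix.det_mul, Matrix.det_one_add_replicateCol_mul_replicateRow]
  simp only [dotProduct, one_mul, Finset.sum_const, Finset.card_univ, nsmul_eq_mul]
  field_simp
  ring

/-- The determinant of `a I - b M - c J` depends only on the characteristic polynomial, the size
and the common row sum of `M`. -/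
theorem det_smul_one_sub_smul_sub_smul_allOnes_congr {n : Type*} [Fintype n] [DecidableEq n]
    {M N : Matrix n n ℝ} {r : ℝ} (hM : ∀ i, ∑ j, M i j = r) (hN : ∀ i, ∑ j, N i j = r)
    (h : M.charpoly = N.charpoly) (a c : ℝ) {b : ℝ} (hb : b ≠ 0) :
    (a • (1 : Matrix n n ℝ) - b • M - c • (Matrix.of fun _ _ => 1)).det =
      (a • (1 : Matrix n n ℝ) - b • N - c • (Matrix.of fun _ _ => 1)).det := by
  have key : ∀ L : Matrix n n ℝ, a • (1 : Matrix n n ℝ) - b • L - c • (Matrix.of fun _ _ => 1) =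
      b • (Matrix.scalar n (a / b) - (L + (c / b) • (Matrix.of fun _ _ => 1))) := by
    intro L
    ext i j
    by_cases hij : i = j <;>
      simp [hij] <;> field_simp <;> ring
  have hcp : (M + (c / b) • (Matrix.of fun _ _ => (1 : ℝ))).charpoly =
      (N + (c / b) • (Matrix.of fun _ _ => (1 : ℝ))).charpoly := by
    refine mul_left_cancel₀ (X_sub_C_ne_zero r) ?_
    rw [charpoly_add_smul_allOnes M r _ hM, charpoly_add_smul_allOnes N r _ hN, h]
  rw [key, key, Matrix.det_smul, Matrix.det_smul, ← Matrix.eval_charpoly, ← Matrix.eval_charpoly,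
    hcp]

theorem det_fromBlocks_fromCols_fromRows {V E W : Type*} [Fintype V] [Fintype E] [Fintype W]
    [DecidableEq V] [DecidableEq E] [DecidableEq W] (A : Matrix V V ℝ) (B : Matrix V E ℝ)
    (β : ℝ) {y : ℝ} (hy : y ≠ 0) {Q : Matrix W W ℝ} (hQ : Q.det ≠ 0) :
    (Matrix.fromBlocks A (Matrix.fromCols (-β • B) (-β • Matrix.of fun _ _ => 1))
      (Matrix.fromRows (-β • Bᵀ) (-β • Matrix.of fun _ _ => 1))
      (Matrix.fromBlocks (y • 1) 0 0 Q)).det =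
    y ^ Fintype.card E * Q.det *
      (A - (β ^ 2 / y) • (B * Bᵀ) -
        (β ^ 2 * ∑ i, ∑ j, Q⁻¹ i j) • (Matrix.of fun _ _ => 1)).det := by
  have hinv : Matrix.fromBlocks (y • (1 : Matrix E E ℝ)) 0 0 Q *
      Matrix.fromBlocks (y⁻¹ • (1 : Matrix E E ℝ)) 0 0 Q⁻¹ = 1 := by
    rw [Matrix.fromBlocks_multiply]
    simp [hy, Matrix.mul_nonsing_inv Q (isUnit_iff_ne_zero.2 hQ)]
  let _ : Invertible (Matrix.fromBlocks (y • (1 : Matrix E E ℝ)) 0 0 Q) :=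
    invertibleOfRightInverse _ _ hinv
  rw [Matrix.det_fromBlocks₂₂, Matrix.invOf_eq_nonsing_inv, Matrix.inv_eq_right_inv hinv,
    Matrix.det_fromBlocks_zero₂₁, Matrix.det_smul, Matrix.det_one, mul_one,
    Matrix.fromCols_mul_fromBlocks, Matrix.fromCols_mul_fromRows]
  congr 2
  rw [sub_sub]
  congr 1
  simp only [Matrix.mul_zero, add_zero, zero_add, Matrix.smul_mul, Matrix.mul_smul, Matrix.mul_one,
    smul_smul]
  congr 1
  · congr 1
    field_simp
  · ext i j
    simp only [Matrix.smul_apply, Matrix.mul_apply, Matrix.of_apply, smul_eq_mul, one_mul, mul_one]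
    rw [Finset.sum_comm]
    ring

theorem coronal_eq_sum_scalar_sub_inv {n : Type*} [Fintype n] [inst : DecidableEq n]
    (M : Matrix n n ℝ) (x : ℝ) :
    coronal M x = ∑ i, ∑ j, (Matrix.scalar n x - M)⁻¹ i j := by
  obtain rfl : inst = fun a b => Classical.propDecidable (a = b) := Subsingleton.elim _ _
  rw [coronal, Matrix.smul_one_eq_diagonal, Matrix.scalar_apply]

theorem sum_Aalpha_row {V : Type*} [Fintype V] (G : SimpleGraph V) (α : ℝ) (v : V) :
    ∑ w, Aalpha G α v w = G.degree v := by
  simp only [Aalpha, Matrix.add_apply, Matrix.smul_apply, Matrix.diagonal_apply, smul_eq_mul,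
    Finset.sum_add_distrib, ← Finset.mul_sum, Finset.sum_ite_eq, Finset.mem_univ, if_true,
    SimpleGraph.adjMatrix_apply, ← SimpleGraph.degree_eq_sum_if_adj]
  ring

theorem degree_le_of_Aalpha_charpoly_eq {V W : Type*} [Fintype V] [Fintype W] [DecidableEq V]
    [DecidableEq W] [Nonempty V] {α : ℝ} (hα : α ∈ Set.Icc (0 : ℝ) 1) {G : SimpleGraph V}
    {H : SimpleGraph W} {r s : ℕ} (hG : G.IsRegularOfDegree r) (hH : H.IsRegularOfDegree s)
    (h : (Aalpha G α).charpoly = (Aalpha H α).charpoly) : r ≤ s := by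
  have hroot : (Aalpha H α).charpoly.IsRoot r := by
    rw [← h, Polynomial.IsRoot, Matrix.eval_charpoly, ← Matrix.exists_mulVec_eq_zero_iff]
    refine ⟨fun _ => 1, fun h0 => one_ne_zero (congrFun h0 (Classical.arbitrary V)), ?_⟩
    ext v
    have h1 := sum_Aalpha_row G α v
    rw [hG v] at h1
    simp only [Matrix.mulVec, dotProduct, mul_one, Matrix.sub_apply, Matrix.scalar_apply,
      Matrix.diagonal_apply, Finset.sum_sub_distrib, h1, Finset.sum_ite_eq, Finset.mem_univ,
      if_true, sub_self, Pi.zero_apply]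
  have heig : Module.End.HasEigenvalue (Matrix.toLin' (Aalpha H α)) (r : ℝ) := by
    rw [Module.End.hasEigenvalue_iff_isRoot_charpoly, Matrix.charpoly_toLin']
    exact hroot
  obtain ⟨k, hk⟩ := eigenvalue_mem_ball heig
  have hnn : ∀ j, 0 ≤ Aalpha H α k j := by
    intro j
    have h0 := hα.1
    have h1 : 0 ≤ 1 - α := sub_nonneg.2 hα.2
    simp only [Aalpha, Matrix.add_apply, Matrix.smul_apply, Matrix.diagonal_apply, smul_eq_mul,
      SimpleGraph.adjMatrix_apply]
    positivity
  have hsum : Aalpha H α k k + ∑ j ∈ Finset.univ.erase k, ‖Aalpha H α k j‖ = s := by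
    simp only [Real.norm_of_nonneg (hnn _)]
    rw [Finset.add_sum_erase _ _ (Finset.mem_univ k), sum_Aalpha_row, hH k]
  rw [Metric.mem_closedBall, Real.dist_eq] at hk
  have : (r : ℝ) ≤ s := by linarith [le_abs_self ((r : ℝ) - Aalpha H α k k)]
  exact_mod_cast this

/-- The vertex-edge incidence matrix of a graph, with columns indexed by the edges only. -/
def edgeIncMatrix {V : Type*} [Fintype V] (G : SimpleGraph V) : Matrix V G.edgeSet ℝ :=
  Matrix.of fun v e => if v ∈ (e : Sym2 V) then 1 else 0

theorem edgeIncMatrix_apply_eq_incMatrix {V : Type*} [Fintype V] (G : SimpleGraph V) (v : V)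
    (e : G.edgeSet) : edgeIncMatrix G v e = G.incMatrix ℝ v e := by
  simp [edgeIncMatrix, SimpleGraph.incMatrix_apply', SimpleGraph.incidenceSet, e.2]

theorem sum_edgeSet_eq_sum_sym2 {V : Type*} [Fintype V] (G : SimpleGraph V) [Fintype G.edgeSet]
    (f : Sym2 V → ℝ) (hf : ∀ e ∉ G.edgeSet, f e = 0) : ∑ e : G.edgeSet, f e = ∑ e, f e := by
  rw [← Finset.sum_subset (Finset.subset_univ G.edgeFinset)
    (fun e _ he => hf e (by simpa using he))]
  exact (Finset.sum_subtype _ (fun e => SimpleGraph.mem_edgeFinset) f).symm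

theorem sum_edgeIncMatrix_row {V : Type*} [Fintype V] (G : SimpleGraph V) [Fintype G.edgeSet]
    (v : V) : ∑ e, edgeIncMatrix G v e = G.degree v := by
  simp only [edgeIncMatrix_apply_eq_incMatrix]
  rw [sum_edgeSet_eq_sum_sym2 G (fun e => G.incMatrix ℝ v e), SimpleGraph.sum_incMatrix_apply]
  exact fun e he => G.incMatrix_of_notMem_incidenceSet fun h => he h.1

theorem sum_edgeIncMatrix_col {V : Type*} [Fintype V] (G : SimpleGraph V) (e : G.edgeSet) :
    ∑ v, edgeIncMatrix G v e = 2 := by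
  simp only [edgeIncMatrix_apply_eq_incMatrix]
  exact G.sum_incMatrix_apply_of_mem_edgeSet e.2

theorem edgeIncMatrix_mul_transpose {V : Type*} [Fintype V] [inst : DecidableEq V] (G : SimpleGraph V)
    [Fintype G.edgeSet] {r : ℕ} (hG : G.IsRegularOfDegree r) :
    edgeIncMatrix G * (edgeIncMatrix G)ᵀ = G.adjMatrix ℝ + (r : ℝ) • 1 := by
  obtain rfl : inst = fun a b => Classical.propDecidable (a = b) := Subsingleton.elim _ _
  ext v w
  have h := congrFun (congrFun (G.incMatrix_mul_transpose (R := ℝ)) v) w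
  rw [Matrix.mul_apply] at h ⊢
  simp only [Matrix.transpose_apply, edgeIncMatrix_apply_eq_incMatrix] at h ⊢
  refine (sum_edgeSet_eq_sum_sym2 G (fun e => G.incMatrix ℝ v e * G.incMatrix ℝ w e) ?_).trans ?_
  · intro e he
    rw [G.incMatrix_of_notMem_incidenceSet fun h => he h.1, zero_mul]
  · rw [h]
    by_cases hvw : v = w
    · subst hvw
      simp [hG v]
    · simp [hvw, SimpleGraph.adjMatrix_apply]

section rVertexJoin

variable {V W : Type*} (G : SimpleGraph V) (H : SimpleGraph W)

@[simp] theorem rVertexJoin_adj_inl_inl (v w : V) :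
    (rVertexJoin G H).Adj (Sum.inl v) (Sum.inl w) ↔ G.Adj v w := by
  simp only [rVertexJoin, SimpleGraph.fromRel_adj]
  exact ⟨fun h => h.2.elim id SimpleGraph.Adj.symm, fun h => ⟨by simpa using h.ne, Or.inl h⟩⟩

@[simp] theorem rVertexJoin_adj_inl_edge (v : V) (e : G.edgeSet) :
    (rVertexJoin G H).Adj (Sum.inl v) (Sum.inr (Sum.inl e)) ↔ v ∈ (e : Sym2 V) := by
  simp [rVertexJoin]

@[simp] theorem rVertexJoin_adj_inl_inr (v : V) (w : W) :
    (rVertexJoin G H).Adj (Sum.inl v) (Sum.inr (Sum.inr w)) := by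
  simp [rVertexJoin]

@[simp] theorem rVertexJoin_adj_edge_inl (v : V) (e : G.edgeSet) :
    (rVertexJoin G H).Adj (Sum.inr (Sum.inl e)) (Sum.inl v) ↔ v ∈ (e : Sym2 V) := by
  simp [rVertexJoin]

@[simp] theorem rVertexJoin_adj_edge_edge (e f : G.edgeSet) :
    ¬ (rVertexJoin G H).Adj (Sum.inr (Sum.inl e)) (Sum.inr (Sum.inl f)) := by
  simp [rVertexJoin]

@[simp] theorem rVertexJoin_adj_edge_inr (e : G.edgeSet) (w : W) :
    ¬ (rVertexJoin G H).Adj (Sum.inr (Sum.inl e)) (Sum.inr (Sum.inr w)) := by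
  simp [rVertexJoin]

@[simp] theorem rVertexJoin_adj_inr_inl (v : V) (w : W) :
    (rVertexJoin G H).Adj (Sum.inr (Sum.inr w)) (Sum.inl v) := by
  simp [rVertexJoin]

@[simp] theorem rVertexJoin_adj_inr_edge (e : G.edgeSet) (w : W) :
    ¬ (rVertexJoin G H).Adj (Sum.inr (Sum.inr w)) (Sum.inr (Sum.inl e)) := by
  simp [rVertexJoin]

@[simp] theorem rVertexJoin_adj_inr_inr (v w : W) :
    (rVertexJoin G H).Adj (Sum.inr (Sum.inr v)) (Sum.inr (Sum.inr w)) ↔ H.Adj v w := by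
  simp only [rVertexJoin, SimpleGraph.fromRel_adj]
  exact ⟨fun h => h.2.elim id SimpleGraph.Adj.symm, fun h => ⟨by simpa using h.ne, Or.inl h⟩⟩

variable [Fintype V] [Fintype W] [Fintype G.edgeSet]

theorem rVertexJoin_degree_inl (v : V) :
    ((rVertexJoin G H).degree (Sum.inl v) : ℝ) = 2 * G.degree v + Fintype.card W := by
  rw [SimpleGraph.degree_eq_sum_if_adj, Fintype.sum_sum_type, Fintype.sum_sum_type]
  have h : ∑ e : G.edgeSet, (if (rVertexJoin G H).Adj (Sum.inl v) (Sum.inr (Sum.inl e))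
      then (1 : ℝ) else 0) = G.degree v := by
    rw [← sum_edgeIncMatrix_row G v]
    refine Finset.sum_congr rfl fun e _ => ?_
    by_cases hv : v ∈ (e : Sym2 V) <;> simp [edgeIncMatrix, hv]
  rw [h]
  simp only [rVertexJoin_adj_inl_inl, rVertexJoin_adj_inl_inr, if_true,
    ← SimpleGraph.degree_eq_sum_if_adj, Finset.sum_const, Finset.card_univ, nsmul_eq_mul]
  ring

theorem rVertexJoin_degree_edge (e : G.edgeSet) :
    ((rVertexJoin G H).degree (Sum.inr (Sum.inl e)) : ℝ) = 2 := by
  rw [SimpleGraph.degree_eq_sum_if_adj, Fintype.sum_sum_type, Fintype.sum_sum_type]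
  have h : ∑ v : V, (if (rVertexJoin G H).Adj (Sum.inr (Sum.inl e)) (Sum.inl v)
      then (1 : ℝ) else 0) = 2 := by
    rw [← sum_edgeIncMatrix_col G e]
    refine Finset.sum_congr rfl fun v _ => ?_
    by_cases hv : v ∈ (e : Sym2 V) <;> simp [edgeIncMatrix, hv]
  rw [h]
  simp

theorem rVertexJoin_degree_inr (w : W) :
    ((rVertexJoin G H).degree (Sum.inr (Sum.inr w)) : ℝ) = H.degree w + Fintype.card V := by
  rw [SimpleGraph.degree_eq_sum_if_adj, Fintype.sum_sum_type, Fintype.sum_sum_type]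
  simp only [rVertexJoin_adj_inr_inl, rVertexJoin_adj_inr_edge, rVertexJoin_adj_inr_inr, if_true,
    if_false, ← SimpleGraph.degree_eq_sum_if_adj, Finset.sum_const, Finset.card_univ, nsmul_eq_mul]
  ring

variable [DecidableEq V] [DecidableEq W]

theorem scalar_sub_Aalpha_rVertexJoin (α x : ℝ) {r : ℕ} (hG : G.IsRegularOfDegree r) :
    Matrix.scalar _ x - Aalpha (rVertexJoin G H) α =
      Matrix.fromBlocks
        ((x - α * (2 * r + Fintype.card W)) • (1 : Matrix V V ℝ) - (1 - α) • G.adjMatrix ℝ)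
        (Matrix.fromCols (-(1 - α) • edgeIncMatrix G) (-(1 - α) • Matrix.of fun _ _ => 1))
        (Matrix.fromRows (-(1 - α) • (edgeIncMatrix G)ᵀ) (-(1 - α) • Matrix.of fun _ _ => 1))
        (Matrix.fromBlocks ((x - 2 * α) • 1) 0 0
          (Matrix.scalar W (x - α * Fintype.card V) - Aalpha H α)) := by
  ext i j
  rcases i with v | e | w <;> rcases j with v' | e' | w'
  · by_cases h : v = v'
    · subst h
      simp [Aalpha, rVertexJoin_degree_inl, hG v]
    · simp [Aalpha, SimpleGraph.adjMatrix_apply, h]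
  · by_cases h : v ∈ (e' : Sym2 V) <;>
      simp [Aalpha, SimpleGraph.adjMatrix_apply, edgeIncMatrix, h]
  · simp [Aalpha, SimpleGraph.adjMatrix_apply]
  · by_cases h : v' ∈ (e : Sym2 V) <;>
      simp [Aalpha, SimpleGraph.adjMatrix_apply, edgeIncMatrix, h]
  · by_cases h : e = e'
    · subst h
      simp [Aalpha, rVertexJoin_degree_edge]
      ring
    · simp [Aalpha, SimpleGraph.adjMatrix_apply, h]
  · simp [Aalpha, SimpleGraph.adjMatrix_apply]
  · simp [Aalpha, SimpleGraph.adjMatrix_apply]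
  · simp [Aalpha, SimpleGraph.adjMatrix_apply]
  · by_cases h : w = w'
    · subst h
      simp [Aalpha, rVertexJoin_degree_inr]
      ring
    · simp [Aalpha, SimpleGraph.adjMatrix_apply, h]

theorem eval_charpoly_Aalpha_rVertexJoin {α x : ℝ} {r : ℕ} (hG : G.IsRegularOfDegree r)
    (hx : x - 2 * α ≠ 0) (hH : (Aalpha H α).charpoly.eval (x - α * Fintype.card V) ≠ 0) :
    (Aalpha (rVertexJoin G H) α).charpoly.eval x =
      (x - 2 * α) ^ Fintype.card G.edgeSet *
        (Aalpha H α).charpoly.eval (x - α * Fintype.card V) *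
        ((x - α * (2 * r + Fintype.card W) + (1 + (1 - α) / (x - 2 * α)) * (α * r) -
            (1 - α) ^ 2 / (x - 2 * α) * r) • (1 : Matrix V V ℝ) -
          (1 + (1 - α) / (x - 2 * α)) • Aalpha G α -
          ((1 - α) ^ 2 * coronal (Aalpha H α) (x - α * Fintype.card V)) •
            (Matrix.of fun _ _ => 1)).det := by
  rw [Matrix.eval_charpoly] at hH
  rw [Matrix.eval_charpoly, Matrix.eval_charpoly, scalar_sub_Aalpha_rVertexJoin G H α x hG,
    det_fromBlocks_fromCols_fromRows _ _ _ hx hH, edgeIncMatrix_mul_transpose G hG]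
  congr 2
  rw [coronal_eq_sum_scalar_sub_inv]
  congr 1
  ext v w
  by_cases h : v = w
  · subst h
    simp [Aalpha, hG v]
    ring
  · by_cases hvw : G.Adj v w <;> simp [Aalpha, SimpleGraph.adjMatrix_apply, h, hvw]
    ring

end rVertexJoin

theorem charpoly_Aalpha_rVertexJoin_eq_of_eval {V V' W W' : Type*} [Fintype V] [Fintype V']
    [Fintype W] [Fintype W'] [DecidableEq V] [DecidableEq V'] [DecidableEq W] [DecidableEq W']
    {α : ℝ} {G : SimpleGraph V} {G' : SimpleGraph V'} {H : SimpleGraph W} {H' : SimpleGraph W'}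
    (h : ∀ x : ℝ, 2 * α < x → (Aalpha H α).charpoly.eval (x - α * Fintype.card V) ≠ 0 →
      (Aalpha (rVertexJoin G H) α).charpoly.eval x =
        (Aalpha (rVertexJoin G' H') α).charpoly.eval x) :
    (Aalpha (rVertexJoin G H) α).charpoly = (Aalpha (rVertexJoin G' H') α).charpoly := by
  have hS : ∀ᶠ x : ℝ in Filter.atTop, 2 * α < x ∧
      (Aalpha H α).charpoly.eval (x - α * Fintype.card V) ≠ 0 := by
    refine (Filter.eventually_gt_atTop _).and ?_
    exact (Filter.tendsto_atTop_add_const_right _ (-(α * Fintype.card V)) Filter.tendsto_id).eventually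
      (Polynomial.eventually_atTop_not_isRoot _ (Matrix.charpoly_monic _).ne_zero)
  obtain ⟨a, ha⟩ := Filter.eventually_atTop.1 hS
  exact Polynomial.eq_of_infinite_eval_eq _ _
    ((Set.Ici_infinite a).mono fun x hx => h x (ha x hx).1 (ha x hx).2)

theorem card_edgeSet_of_isRegularOfDegree {V : Type*} [Fintype V] {G : SimpleGraph V}
    [Fintype G.edgeSet] {r : ℕ} (hG : G.IsRegularOfDegree r) :
    2 * Fintype.card G.edgeSet = Fintype.card V * r := by
  have h := G.sum_degrees_eq_twice_card_edges
  simp only [hG _, Finset.sum_const, Finset.card_univ, smul_eq_mul,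
    SimpleGraph.edgeFinset_card] at h
  convert h.symm

/-- Corollary: constructions of `A_α`-cospectral pairs from `R`-vertex joins.
(1) Joining two `A_α`-cospectral regular graphs with the same arbitrary graph `H` gives
`A_α`-cospectral graphs.  (2) Joining a regular graph `G` with two `A_α`-cospectral
graphs having equal `A_α`-coronals gives `A_α`-cospectral graphs. -/
theorem Aalpha_cospectral_rVertexJoin
    (α : ℝ) (hα : α ∈ Set.Icc (0 : ℝ) 1) :
    (∀ (n₁ n₂ k r₁ r₂ : ℕ) (G₁ : SimpleGraph (Fin n₁)) (G₂ : SimpleGraph (Fin n₂))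
        (H : SimpleGraph (Fin k)),
      G₁.IsRegularOfDegree r₁ → G₂.IsRegularOfDegree r₂ →
      (Aalpha G₁ α).charpoly = (Aalpha G₂ α).charpoly →
      (Aalpha (rVertexJoin G₁ H) α).charpoly =
        (Aalpha (rVertexJoin G₂ H) α).charpoly) ∧
    (∀ (n k₁ k₂ r : ℕ) (G : SimpleGraph (Fin n)) (H₁ : SimpleGraph (Fin k₁))
        (H₂ : SimpleGraph (Fin k₂)),
      G.IsRegularOfDegree r →
      (Aalpha H₁ α).charpoly = (Aalpha H₂ α).charpoly →
      (∀ x : ℝ, coronal (Aalpha H₁ α) x = coronal (Aalpha H₂ α) x) →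
      (Aalpha (rVertexJoin G H₁) α).charpoly =
        (Aalpha (rVertexJoin G H₂) α).charpoly) := by
  constructor
  · intro n₁ n₂ k r₁ r₂ G₁ G₂ H h₁ h₂ h
    have hn : n₁ = n₂ := by
      simpa using congrArg Polynomial.natDegree h
    subst hn
    obtain ⟨r, h₁, h₂⟩ : ∃ r, G₁.IsRegularOfDegree r ∧ G₂.IsRegularOfDegree r := by
      rcases isEmpty_or_nonempty (Fin n₁) with he | he
      · exact ⟨0, fun v => he.elim v, fun v => he.elim v⟩
      · have hr : r₁ = r₂ := le_antisymm (degree_le_of_Aalpha_charpoly_eq hα h₁ h₂ h)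
          (degree_le_of_Aalpha_charpoly_eq hα h₂ h₁ h.symm)
        exact ⟨r₁, h₁, hr ▸ h₂⟩
    refine charpoly_Aalpha_rVertexJoin_eq_of_eval fun x hx hx' => ?_
    have hx0 : 0 < x - 2 * α := sub_pos.2 hx
    have hb : 1 + (1 - α) / (x - 2 * α) ≠ 0 := by
      have := div_nonneg (sub_nonneg.2 hα.2) hx0.le
      positivity
    have hedge : Fintype.card G₁.edgeSet = Fintype.card G₂.edgeSet := by
      have e₁ := card_edgeSet_of_isRegularOfDegree h₁
      have e₂ := card_edgeSet_of_isRegularOfDegree h₂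
      omega
    rw [eval_charpoly_Aalpha_rVertexJoin G₁ H h₁ hx0.ne' hx',
      eval_charpoly_Aalpha_rVertexJoin G₂ H h₂ hx0.ne' hx', hedge]
    congr 1
    refine det_smul_one_sub_smul_sub_smul_allOnes_congr (r := r) (fun i => ?_) (fun i => ?_) h _ _ hb
    · rw [sum_Aalpha_row, h₁ i]
    · rw [sum_Aalpha_row, h₂ i]
  · intro n k₁ k₂ r G H₁ H₂ hG h hcor
    have hk : k₁ = k₂ := by
      simpa using congrArg Polynomial.natDegree h
    subst hk
    refine charpoly_Aalpha_rVertexJoin_eq_of_eval fun x hx hx' => ?_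
    have hx0 : x - 2 * α ≠ 0 := (sub_pos.2 hx).ne'
    rw [eval_charpoly_Aalpha_rVertexJoin G H₁ hG hx0 hx',
      eval_charpoly_Aalpha_rVertexJoin G H₂ hG hx0 (h ▸ hx'), h, hcor]
end
end

section
/- Let G₁ be an r₁-regular graph on n₁ vertices and m₁ edges, and G₂ an r₂-regular graph on n₂ vertices, and let α ∈ [0,1]. (1) If r₁ = 1, then the A_α-spectrum of the R-edge join G₁⟨e⟩G₂ consists precisely of: 3α − 1; the values α + λ_i(A_α(G₂)) for i = 2,…,n₂; and the three roots of F(x) = (x−α−r₂)(x² − (3α+αn₂+1)x + α²n₂ + 6α + αn₂ − 2) − n₂(1−α)²(x−α−1). (2) If r₁ ≥ 2, then the A_α-spectrum of G₁⟨e⟩G₂ consists precisely of: α(2+n₂) repeated m₁−n₁ times; αm₁ + λ_i(A_α(G₂)) for i = 2,…,n₂; the two roots of G_i(x) = x² − (2α+αr₁+αn₂+λ_i(A_α(G₁)))x + α²r₁n₂ + 3αr₁ − r₁ + (3α+αn₂−1)λ_i(A_α(G₁)) for each i = 2,…,n₁; and the three roots of F(x) = (x−αm₁−r₂)(x² − (2α+αr₁+αn₂+r₁)x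 + (α²r₁n₂+6αr₁+αr₁n₂−2r₁)) − m₁n₂(1−α)²(x−αr₁−r₁). -/
open Matrix Polynomial
open scoped Classical

noncomputable section

/-- The `R`-edge join `G₁⟨e⟩G₂`: take the `R`-graph `R(G₁)` (for each edge of `G₁` a
new vertex joined to both of its endpoints) together with `G₂`, and join every inserted
vertex of `R(G₁)` with every vertex of `G₂`. -/
def rEdgeJoin {V₁ V₂ : Type*} (G₁ : SimpleGraph V₁) (G₂ : SimpleGraph V₂) :
    SimpleGraph (V₁ ⊕ (↥G₁.edgeSet ⊕ V₂)) :=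
  SimpleGraph.fromRel fun a b =>
    match a, b with
    | Sum.inl v, Sum.inl w => G₁.Adj v w
    | Sum.inl v, Sum.inr (Sum.inl e) => v ∈ (e : Sym2 V₁)
    | Sum.inr (Sum.inl _), Sum.inr (Sum.inr _) => True
    | Sum.inr (Sum.inr u), Sum.inr (Sum.inr w) => G₂.Adj u w
    | _, _ => False


namespace Matrix

theorem fromBlocks_sub {l m n o R : Type*} [Sub R] (A A' : Matrix n l R) (B B' : Matrix n m R)
    (C C' : Matrix o l R) (D D' : Matrix o m R) :
    fromBlocks A B C D - fromBlocks A' B' C' D' =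
      fromBlocks (A - A') (B - B') (C - C') (D - D') := by
  ext (i | i) (j | j) <;> rfl

/-- If `P` and `Q` have the all-ones vector as an eigenvector, perturbing the block diagonal
matrix `diag(P, Q)` by constant blocks changes its determinant by an explicit factor. -/
theorem det_fromBlocks_add_const {m n : Type*} [Fintype m] [Fintype n] [DecidableEq m]
    [DecidableEq n] {K : Type*} [Field K] (P : Matrix m m K) (Q : Matrix n n K)
    {p q : K} (hp : p ≠ 0) (hq : q ≠ 0) (hP : P *ᵥ 1 = fun _ => p) (hQ : Q *ᵥ 1 = fun _ => q)
    (b c d : K) :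
    (fromBlocks P (of fun _ _ => b) (of fun _ _ => c) (Q + of fun _ _ => d)).det * (p * q) =
      P.det * Q.det *
        (p * (q + d * Fintype.card n) - b * c * Fintype.card m * Fintype.card n) := by
  let U : Matrix (m ⊕ n) (Unit ⊕ Unit) K :=
    fromBlocks (of fun _ _ => p⁻¹) 0 0 (of fun _ _ => q⁻¹)
  let W : Matrix (Unit ⊕ Unit) (m ⊕ n) K :=
    fromBlocks 0 (of fun _ _ => b) (of fun _ _ => c) (of fun _ _ => d)
  have hPi : ∀ i, ∑ j, P i j = p := fun i => by
    simpa [mulVec, dotProduct] using congrFun hP i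
  have hQi : ∀ i, ∑ j, Q i j = q := fun i => by
    simpa [mulVec, dotProduct] using congrFun hQ i
  have hfac : fromBlocks P (of fun _ _ => b) (of fun _ _ => c) (Q + of fun _ _ => d) =
      fromBlocks P 0 0 Q * (1 + U * W) := by
    have hU : fromBlocks P 0 0 Q * U =
        fromBlocks (of fun _ _ => 1) 0 0 (of fun _ _ => 1) := by
      simp only [U, fromBlocks_multiply]
      ext (i | i) (j | j) <;> simp [mul_apply, ← Finset.sum_mul, hPi, hQi, hp, hq]
    rw [mul_add, mul_one, ← Matrix.mul_assoc, hU]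
    simp only [W, fromBlocks_multiply, fromBlocks_add]
    ext (i | i) (j | j) <;> simp [mul_apply]
  have hdet : (1 + W * U).det * (p * q) =
      p * (q + d * Fintype.card n) - b * c * Fintype.card m * Fintype.card n := by
    have hWU : 1 + W * U = fromBlocks 1 (of fun _ _ => Fintype.card n * (b * q⁻¹))
        (of fun _ _ => Fintype.card m * (c * p⁻¹))
        (1 + of fun _ _ => Fintype.card n * (d * q⁻¹)) := by
      simp only [W, U, fromBlocks_multiply]
      rw [← fromBlocks_one, fromBlocks_add]
      ext (i | i) (j | j) <;> simp [mul_apply]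
    rw [hWU, det_fromBlocks_one₁₁, det_unique]
    simp [mul_apply]
    field_simp
  rw [hfac, det_mul, det_fromBlocks_zero₂₁, det_one_add_mul_comm, mul_assoc, hdet]

theorem det_smul_one_sub_smul_of_charpoly_eq_prod {n ι : Type*} [Fintype n] [DecidableEq n]
    [Fintype ι] {K : Type*} [Field K] {A : Matrix n n K} {μ : ι → K}
    (hμ : A.charpoly = ∏ i, (X - C (μ i))) (s : K) {t : K} (ht : t ≠ 0) :
    (s • (1 : Matrix n n K) - t • A).det = ∏ i, (s - t * μ i) := by
  have hcard : Fintype.card n = Fintype.card ι := by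
    rw [← A.charpoly_natDegree_eq_dim, hμ, natDegree_finsetProd_X_sub_C_eq_card, Finset.card_univ]
  have h : s • (1 : Matrix n n K) - t • A = t • (scalar n (s / t) - A) := by
    rw [smul_sub, scalar_apply, ← smul_one_eq_diagonal, smul_smul, mul_div_cancel₀ _ ht]
  rw [h, det_smul, ← eval_charpoly, hμ, eval_prod, hcard, ← Finset.card_univ,
    ← Finset.prod_const, ← Finset.prod_mul_distrib]
  refine Finset.prod_congr rfl fun i _ => ?_
  rw [eval_sub, eval_X, eval_C, mul_sub, mul_div_cancel₀ _ ht]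

/-- The Perron root of a nonnegative matrix with constant row sums is the row sum. -/
theorem eq_of_antitone_of_charpoly_eq_prod {n : Type*} [Fintype n] [DecidableEq n] [Nonempty n]
    {A : Matrix n n ℝ} {r : ℝ} (hA : ∀ i j, 0 ≤ A i j) (hr : A *ᵥ 1 = fun _ => r)
    {k : ℕ} [NeZero k] {μ : Fin k → ℝ} (hμ : Antitone μ)
    (hch : A.charpoly = ∏ i, (X - C (μ i))) : μ 0 = r := by
  have hri : ∀ i, ∑ j, A i j = r := fun i => by
    simpa [mulVec, dotProduct] using congrFun hr i
  apply le_antisymm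
  · have hroot : A.charpoly.IsRoot (μ 0) := by
      rw [IsRoot.def, hch, eval_prod]
      exact Finset.prod_eq_zero (Finset.mem_univ 0) (by simp)
    have heig : Module.End.HasEigenvalue (toLin' A) (μ 0) := by
      rw [Module.End.hasEigenvalue_iff_isRoot_charpoly, charpoly_toLin']
      exact hroot
    obtain ⟨i, hi⟩ := eigenvalue_mem_ball heig
    rw [Metric.mem_closedBall, Real.dist_eq] at hi
    have h := (le_abs_self _).trans hi
    simp only [Real.norm_eq_abs, abs_of_nonneg (hA i _)] at h
    rw [← hri i, ← Finset.add_sum_erase _ _ (Finset.mem_univ i)]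
    linarith
  · have hdet : (scalar n r - A).det = 0 := by
      rw [← exists_mulVec_eq_zero_iff]
      refine ⟨1, one_ne_zero, ?_⟩
      rw [sub_mulVec, hr, scalar_apply, ← smul_one_eq_diagonal, smul_mulVec, one_mulVec]
      ext i
      simp
    rw [← eval_charpoly, hch, eval_prod, Finset.prod_eq_zero_iff] at hdet
    obtain ⟨i, -, hi⟩ := hdet
    rw [eval_sub, eval_X, eval_C, sub_eq_zero] at hi
    exact hi ▸ hμ (Fin.zero_le i)

end Matrix

namespace SimpleGraph

/-- The incidence matrix with columns indexed by the edges only. -/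
def edgeIncMatrix {V : Type*} (G : SimpleGraph V) : Matrix V G.edgeSet ℝ :=
  Matrix.of fun v e => if v ∈ (e : Sym2 V) then 1 else 0

theorem incMatrix_apply_edge {V : Type*} [DecidableEq V] (G : SimpleGraph V) (v : V) (e : G.edgeSet) :
    G.incMatrix ℝ v e = G.edgeIncMatrix v e := by
  have := e.2
  simp [incMatrix_apply', edgeIncMatrix, incidenceSet, this]

theorem sum_edgeSet_eq_sum_sym2 {V : Type*} [Fintype V] (G : SimpleGraph V) {f : Sym2 V → ℝ}
    (hf : ∀ e ∉ G.edgeSet, f e = 0) :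
    ∑ e : G.edgeSet, f e = ∑ e, f e := by
  rw [← Finset.sum_subtype G.edgeFinset (fun e => mem_edgeFinset)]
  exact Finset.sum_subset (Finset.subset_univ _) fun e _ he => hf e (by simpa using he)

theorem sum_edgeIncMatrix_row {V : Type*} [Fintype V] [DecidableEq V] (G : SimpleGraph V) (v : V) :
    ∑ e, G.edgeIncMatrix v e = G.degree v := by
  simp_rw [← incMatrix_apply_edge]
  rw [sum_edgeSet_eq_sum_sym2 G (f := fun e => G.incMatrix ℝ v e), sum_incMatrix_apply]
  exact fun e he => G.incMatrix_of_notMem_incidenceSet fun h => he h.1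

theorem sum_edgeIncMatrix_col {V : Type*} [Fintype V] [DecidableEq V] (G : SimpleGraph V)
    (e : G.edgeSet) : ∑ v, G.edgeIncMatrix v e = 2 := by
  simp_rw [← incMatrix_apply_edge]
  exact G.sum_incMatrix_apply_of_mem_edgeSet e.2

theorem edgeIncMatrix_mul_transpose {V : Type*} [Fintype V] [DecidableEq V] (G : SimpleGraph V)
    {r : ℕ} (hr : G.IsRegularOfDegree r) :
    G.edgeIncMatrix * G.edgeIncMatrixᵀ = (r : ℝ) • (1 : Matrix V V ℝ) + G.adjMatrix ℝ := by
  ext v w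
  have h : (G.edgeIncMatrix * G.edgeIncMatrixᵀ) v w =
      (G.incMatrix ℝ * (G.incMatrix ℝ)ᵀ) v w := by
    simp_rw [mul_apply, transpose_apply, ← incMatrix_apply_edge]
    rw [sum_edgeSet_eq_sum_sym2 G (f := fun e => G.incMatrix ℝ v e * G.incMatrix ℝ w e)]
    intro e he
    rw [G.incMatrix_of_notMem_incidenceSet fun h => he h.1, zero_mul]
  rw [h, incMatrix_mul_transpose]
  by_cases hvw : v = w
  · subst hvw
    simpa using hr.degree_eq v
  · simp [hvw, adjMatrix_apply]

end SimpleGraph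

section rEdgeJoin

variable {V₁ V₂ : Type*} (G₁ : SimpleGraph V₁) (G₂ : SimpleGraph V₂)

theorem rEdgeJoin_adj_inl_inl (v w : V₁) :
    (rEdgeJoin G₁ G₂).Adj (.inl v) (.inl w) ↔ G₁.Adj v w := by
  simp only [rEdgeJoin, SimpleGraph.fromRel_adj, G₁.adj_comm w v, or_self, and_iff_right_iff_imp]
  exact fun h => by simpa using h.ne

theorem rEdgeJoin_adj_inl_edge (v : V₁) (e : G₁.edgeSet) :
    (rEdgeJoin G₁ G₂).Adj (.inl v) (.inr (.inl e)) ↔ v ∈ (e : Sym2 V₁) := by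
  simp [rEdgeJoin]

theorem rEdgeJoin_adj_edge_inl (v : V₁) (e : G₁.edgeSet) :
    (rEdgeJoin G₁ G₂).Adj (.inr (.inl e)) (.inl v) ↔ v ∈ (e : Sym2 V₁) := by
  simp [rEdgeJoin]

theorem rEdgeJoin_adj_inl_inr (v : V₁) (u : V₂) :
    ¬(rEdgeJoin G₁ G₂).Adj (.inl v) (.inr (.inr u)) := by
  simp [rEdgeJoin]

theorem rEdgeJoin_adj_inr_inl (v : V₁) (u : V₂) :
    ¬(rEdgeJoin G₁ G₂).Adj (.inr (.inr u)) (.inl v) := by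
  simp [rEdgeJoin]

theorem rEdgeJoin_adj_edge_edge (e f : G₁.edgeSet) :
    ¬(rEdgeJoin G₁ G₂).Adj (.inr (.inl e)) (.inr (.inl f)) := by
  simp [rEdgeJoin]

theorem rEdgeJoin_adj_edge_inr (e : G₁.edgeSet) (u : V₂) :
    (rEdgeJoin G₁ G₂).Adj (.inr (.inl e)) (.inr (.inr u)) := by
  simp [rEdgeJoin]

theorem rEdgeJoin_adj_inr_edge (e : G₁.edgeSet) (u : V₂) :
    (rEdgeJoin G₁ G₂).Adj (.inr (.inr u)) (.inr (.inl e)) := by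
  simp [rEdgeJoin]

theorem rEdgeJoin_adj_inr_inr (u w : V₂) :
    (rEdgeJoin G₁ G₂).Adj (.inr (.inr u)) (.inr (.inr w)) ↔ G₂.Adj u w := by
  simp only [rEdgeJoin, SimpleGraph.fromRel_adj, G₂.adj_comm w u, or_self, and_iff_right_iff_imp]
  exact fun h => by simpa using h.ne

variable [Fintype V₁] [Fintype V₂]

theorem degree_rEdgeJoin_inl (v : V₁) :
    ((rEdgeJoin G₁ G₂).degree (.inl v) : ℝ) = 2 * G₁.degree v := by
  rw [SimpleGraph.degree_eq_sum_if_adj, Fintype.sum_sum_type, Fintype.sum_sum_type]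
  simp only [rEdgeJoin_adj_inl_inl, rEdgeJoin_adj_inl_edge, rEdgeJoin_adj_inl_inr]
  convert_to (G₁.degree v : ℝ) + (∑ e, G₁.edgeIncMatrix v e + ∑ _ : V₂, (0 : ℝ)) = _
  · rw [SimpleGraph.degree_eq_sum_if_adj]
    simp only [SimpleGraph.edgeIncMatrix, of_apply, if_false]
  · rw [G₁.sum_edgeIncMatrix_row]
    simp [two_mul]

theorem degree_rEdgeJoin_edge (e : G₁.edgeSet) :
    ((rEdgeJoin G₁ G₂).degree (.inr (.inl e)) : ℝ) = 2 + Fintype.card V₂ := by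
  rw [SimpleGraph.degree_eq_sum_if_adj, Fintype.sum_sum_type, Fintype.sum_sum_type]
  simp only [rEdgeJoin_adj_edge_inl, rEdgeJoin_adj_edge_edge, rEdgeJoin_adj_edge_inr]
  convert_to ∑ v, G₁.edgeIncMatrix v e + (∑ _ : G₁.edgeSet, (0 : ℝ) + ∑ _ : V₂, (1 : ℝ)) = _
  · simp only [SimpleGraph.edgeIncMatrix, of_apply, if_false, if_true]
  · rw [G₁.sum_edgeIncMatrix_col]
    simp

theorem degree_rEdgeJoin_inr (u : V₂) :
    ((rEdgeJoin G₁ G₂).degree (.inr (.inr u)) : ℝ) =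
      Fintype.card G₁.edgeSet + G₂.degree u := by
  rw [SimpleGraph.degree_eq_sum_if_adj, Fintype.sum_sum_type, Fintype.sum_sum_type]
  simp only [rEdgeJoin_adj_inr_inl, rEdgeJoin_adj_inr_edge, rEdgeJoin_adj_inr_inr]
  rw [← SimpleGraph.degree_eq_sum_if_adj]
  simp

theorem Aalpha_apply {V : Type*} [Fintype V] [DecidableEq V] (G : SimpleGraph V) (α : ℝ)
    (v w : V) : Aalpha G α v w =
      (if v = w then α * G.degree v else 0) + (if G.Adj v w then 1 - α else 0) := by
  simp [Aalpha, Matrix.diagonal_apply, SimpleGraph.adjMatrix_apply]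

theorem Aalpha_eq_of_isRegularOfDegree {V : Type*} [Fintype V] [DecidableEq V]
    {G : SimpleGraph V} {r : ℕ} (hr : G.IsRegularOfDegree r) (α : ℝ) :
    Aalpha G α = (α * r) • (1 : Matrix V V ℝ) + (1 - α) • G.adjMatrix ℝ := by
  ext v w
  simp [Aalpha_apply, Matrix.one_apply, SimpleGraph.adjMatrix_apply, hr.degree_eq]

theorem Aalpha_mulVec_one {V : Type*} [Fintype V] [DecidableEq V]
    {G : SimpleGraph V} {r : ℕ} (hr : G.IsRegularOfDegree r) (α : ℝ) :
    Aalpha G α *ᵥ 1 = fun _ => (r : ℝ) := by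
  ext v
  simp only [mulVec, dotProduct, Pi.one_apply, mul_one, Aalpha_apply, Finset.sum_add_distrib]
  have h := SimpleGraph.degree_eq_sum_if_adj G (R := ℝ) v
  rw [hr.degree_eq] at h
  have h' : ∑ w, (if G.Adj v w then 1 - α else 0) = (1 - α) * r := by
    rw [h, Finset.mul_sum]
    simp
  rw [h']
  simp [hr.degree_eq]
  ring

theorem Aalpha_rEdgeJoin_submatrix [DecidableEq V₁] [DecidableEq V₂] {r₁ : ℕ} (hr : G₁.IsRegularOfDegree r₁) (α : ℝ) :
    (Aalpha (rEdgeJoin G₁ G₂) α).submatrix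
        ((Equiv.sumAssoc V₁ V₂ G₁.edgeSet).trans
          (Equiv.sumCongr (Equiv.refl V₁) (Equiv.sumComm V₂ G₁.edgeSet)))
        ((Equiv.sumAssoc V₁ V₂ G₁.edgeSet).trans
          (Equiv.sumCongr (Equiv.refl V₁) (Equiv.sumComm V₂ G₁.edgeSet))) =
      fromBlocks
        (fromBlocks ((α * r₁) • (1 : Matrix V₁ V₁ ℝ) + Aalpha G₁ α) 0 0
          ((α * Fintype.card G₁.edgeSet) • (1 : Matrix V₂ V₂ ℝ) + Aalpha G₂ α))
        ((1 - α) • fromRows G₁.edgeIncMatrix (of fun _ _ => 1))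
        ((1 - α) • fromCols G₁.edgeIncMatrixᵀ (of fun _ _ => 1))
        ((α * (2 + Fintype.card V₂)) • 1) := by
  ext ((v | v) | v) ((w | w) | w) <;>
    simp [Aalpha_apply, rEdgeJoin_adj_inl_inl, rEdgeJoin_adj_inl_edge, rEdgeJoin_adj_inl_inr,
      rEdgeJoin_adj_edge_inl, rEdgeJoin_adj_edge_edge, rEdgeJoin_adj_edge_inr,
      rEdgeJoin_adj_inr_inl, rEdgeJoin_adj_inr_edge, rEdgeJoin_adj_inr_inr,
      degree_rEdgeJoin_inl, degree_rEdgeJoin_edge, degree_rEdgeJoin_inr, hr.degree_eq,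
      SimpleGraph.edgeIncMatrix, Matrix.one_apply]
  all_goals split_ifs <;> ring

theorem eval_charpoly_Aalpha_rEdgeJoin [DecidableEq V₁] [DecidableEq V₂] {r₁ r₂ : ℕ}
    (hreg₁ : G₁.IsRegularOfDegree r₁) (hreg₂ : G₂.IsRegularOfDegree r₂) {α x c k s t q : ℝ}
    (hc : c = x - α * (2 + Fintype.card V₂)) (hc0 : c ≠ 0)
    (hk : k = (1 - α) ^ 2 / c) (ht : t = 1 + (1 - α) / c) (ht0 : t ≠ 0)
    (hs : s = x - α * r₁ - k * r₁ + (1 - α) / c * (α * r₁)) (hp : s - t * r₁ ≠ 0)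
    (hq : q = x - α * Fintype.card G₁.edgeSet - r₂) (hq0 : q ≠ 0)
    {ι₁ ι₂ : Type*} [Fintype ι₁] [Fintype ι₂] {μ₁ : ι₁ → ℝ} {μ₂ : ι₂ → ℝ}
    (hμ₁ : (Aalpha G₁ α).charpoly = ∏ i, (X - C (μ₁ i)))
    (hμ₂ : (Aalpha G₂ α).charpoly = ∏ i, (X - C (μ₂ i))) :
    (Aalpha (rEdgeJoin G₁ G₂) α).charpoly.eval x * ((s - t * r₁) * q) =
      c ^ Fintype.card G₁.edgeSet * ((∏ i, (s - t * μ₁ i)) *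
        (∏ i, (x - α * Fintype.card G₁.edgeSet - μ₂ i)) *
        ((s - t * r₁) * (q - k * Fintype.card G₁.edgeSet * Fintype.card V₂)
          - (k * r₁) ^ 2 * Fintype.card V₁ * Fintype.card V₂)) := by
  set m := Fintype.card G₁.edgeSet with hm
  set P := s • (1 : Matrix V₁ V₁ ℝ) - t • Aalpha G₁ α with hP
  set Q := (x - α * m) • (1 : Matrix V₂ V₂ ℝ) - (1 : ℝ) • Aalpha G₂ α with hQ
  have hP1 : P *ᵥ 1 = fun _ => s - t * r₁ := by
    rw [hP, sub_mulVec, smul_mulVec, smul_mulVec, Aalpha_mulVec_one hreg₁, one_mulVec]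
    ext i
    simp
  have hQ1 : Q *ᵥ 1 = fun _ => q := by
    rw [hQ, sub_mulVec, smul_mulVec, smul_mulVec, Aalpha_mulVec_one hreg₂, one_mulVec, hq]
    ext i
    simp
  have hdet : (Aalpha (rEdgeJoin G₁ G₂) α).charpoly.eval x =
      c ^ m * (fromBlocks P (of fun _ _ => -(k * r₁)) (of fun _ _ => -(k * r₁))
        (Q + of fun _ _ => -(k * m))).det := by
    have hblock : x • (1 : Matrix ((V₁ ⊕ V₂) ⊕ G₁.edgeSet) ((V₁ ⊕ V₂) ⊕ G₁.edgeSet) ℝ) -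
        fromBlocks
        (fromBlocks ((α * r₁) • (1 : Matrix V₁ V₁ ℝ) + Aalpha G₁ α) 0 0
          ((α * m) • (1 : Matrix V₂ V₂ ℝ) + Aalpha G₂ α))
        ((1 - α) • fromRows G₁.edgeIncMatrix (of fun _ _ => 1))
        ((1 - α) • fromCols G₁.edgeIncMatrixᵀ (of fun _ _ => 1))
        ((α * (2 + Fintype.card V₂)) • 1) =
      fromBlocks
        (fromBlocks ((x - α * r₁) • (1 : Matrix V₁ V₁ ℝ) - Aalpha G₁ α) 0 0 Q)
        (-(1 - α) • fromRows G₁.edgeIncMatrix (of fun _ _ => 1))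
        (-(1 - α) • fromCols G₁.edgeIncMatrixᵀ (of fun _ _ => 1))
        (c • 1) := by
      rw [← fromBlocks_one, ← fromBlocks_one, fromBlocks_smul, fromBlocks_smul, fromBlocks_sub,
        fromBlocks_sub, hQ, hc]
      congr 1
      · congr 1 <;> module
      all_goals module
    let : Invertible (c • (1 : Matrix G₁.edgeSet G₁.edgeSet ℝ)) :=
      ⟨c⁻¹ • 1, by simp [hc0], by simp [hc0]⟩
    have hinv : ⅟(c • (1 : Matrix G₁.edgeSet G₁.edgeSet ℝ)) = c⁻¹ • 1 := rfl
    rw [eval_charpoly, scalar_apply, ← smul_one_eq_diagonal,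
      ← det_submatrix_equiv_self ((Equiv.sumAssoc V₁ V₂ G₁.edgeSet).trans
          (Equiv.sumCongr (Equiv.refl V₁) (Equiv.sumComm V₂ G₁.edgeSet))),
      submatrix_sub, Pi.sub_apply, Pi.sub_apply, submatrix_smul, Pi.smul_apply, Pi.smul_apply,
      submatrix_one_equiv, Aalpha_rEdgeJoin_submatrix _ _ hreg₁, ← hm, hblock,
      det_fromBlocks₂₂, hinv, det_smul, det_one, mul_one, ← hm]
    congr 2
    have hB : -(1 - α) • fromRows G₁.edgeIncMatrix (of fun (_ : V₂) _ => (1 : ℝ)) *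
        c⁻¹ • (1 : Matrix G₁.edgeSet G₁.edgeSet ℝ) *
        -(1 - α) • fromCols G₁.edgeIncMatrixᵀ (of fun _ (_ : V₂) => (1 : ℝ)) =
        k • fromBlocks ((r₁ : ℝ) • 1 + G₁.adjMatrix ℝ) (of fun _ _ => (r₁ : ℝ))
          (of fun _ _ => (r₁ : ℝ)) (of fun _ _ => (m : ℝ)) := by
      simp only [Matrix.smul_mul, Matrix.mul_smul, Matrix.mul_one, smul_smul,
        fromRows_mul_fromCols]
      rw [G₁.edgeIncMatrix_mul_transpose hreg₁]
      congr 1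
      · rw [hk]; ring
      · congr 1
        · ext v w
          simp [mul_apply, G₁.sum_edgeIncMatrix_row, hreg₁.degree_eq]
        · ext v w
          simp [mul_apply, G₁.sum_edgeIncMatrix_row, hreg₁.degree_eq]
        · ext v w
          simp [mul_apply, hm]
    rw [hB, fromBlocks_smul, fromBlocks_sub]
    congr 1
    · rw [hP, Aalpha_eq_of_isRegularOfDegree hreg₁, hs, ht, hk]
      ext v w
      simp only [Matrix.sub_apply, Matrix.add_apply, Matrix.smul_apply, smul_eq_mul]
      field_simp
      ring
    · ext v w
      simp
    · ext v w
      simp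
  have hprod := det_fromBlocks_add_const P Q hp hq0 hP1 hQ1 (-(k * r₁)) (-(k * r₁)) (-(k * m))
  rw [det_smul_one_sub_smul_of_charpoly_eq_prod hμ₁ s ht0,
    det_smul_one_sub_smul_of_charpoly_eq_prod hμ₂ _ one_ne_zero] at hprod
  rw [hdet, mul_assoc, hprod]
  simp only [one_mul]
  ring

end rEdgeJoin

theorem Polynomial.eq_of_eval_eq_of_eval_ne_zero {P Q W : ℝ[X]} (hW : W ≠ 0)
    (h : ∀ x, W.eval x ≠ 0 → P.eval x = Q.eval x) : P = Q := by
  have hmul : (P - Q) * W = 0 := by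
    refine Polynomial.funext fun x => ?_
    rw [eval_mul, eval_sub, eval_zero]
    by_cases hx : W.eval x = 0
    · rw [hx, mul_zero]
    · rw [h x hx, sub_self, zero_mul]
  exact sub_eq_zero.mp ((mul_eq_zero.mp hmul).resolve_right hW)

theorem Fin.prod_eq_zero_mul_prod_filter_ne_zero {n : ℕ} [NeZero n] {M : Type*} [CommMonoid M]
    (f : Fin n → M) : ∏ i, f i = f 0 * ∏ i with i.val ≠ 0, f i := by
  rw [← Finset.mul_prod_erase _ _ (Finset.mem_univ 0)]
  congr 2
  ext i
  simp

theorem Aalpha_apply_nonneg {V : Type*} [Fintype V] [DecidableEq V] (G : SimpleGraph V) {α : ℝ}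
    (hα : α ∈ Set.Icc (0 : ℝ) 1) (v w : V) : 0 ≤ Aalpha G α v w := by
  have h0 := hα.1
  have h1 := sub_nonneg.mpr hα.2
  rw [Aalpha_apply]
  split_ifs <;> positivity

theorem SimpleGraph.IsRegularOfDegree.card_mul_eq_two_mul_card_edgeSet {V : Type*} [Fintype V]
    {G : SimpleGraph V} {r : ℕ} (hr : G.IsRegularOfDegree r) :
    Fintype.card V * r = 2 * Fintype.card G.edgeSet := by
  have h := G.sum_degrees_eq_twice_card_edges
  simp_rw [hr.degree_eq] at h
  rw [Finset.sum_const, Finset.card_univ, smul_eq_mul] at h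
  rw [h]
  simp [SimpleGraph.edgeFinset]

theorem charpoly_Aalpha_rEdgeJoin_mul {n₁ n₂ r₁ r₂ : ℕ} [NeZero n₁] [NeZero n₂]
    {G₁ : SimpleGraph (Fin n₁)} {G₂ : SimpleGraph (Fin n₂)}
    (hreg₁ : G₁.IsRegularOfDegree r₁) (hreg₂ : G₂.IsRegularOfDegree r₂)
    {α : ℝ} {μ₁ : Fin n₁ → ℝ} {μ₂ : Fin n₂ → ℝ}
    (hμ₁ : (Aalpha G₁ α).charpoly = ∏ i, (X - C (μ₁ i)))
    (hμ₂ : (Aalpha G₂ α).charpoly = ∏ i, (X - C (μ₂ i)))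
    (h₁ : μ₁ 0 = r₁) (h₂ : μ₂ 0 = r₂) {m : ℕ} (hm : Fintype.card G₁.edgeSet = m) :
    (Aalpha (rEdgeJoin G₁ G₂) α).charpoly * (X - C (α * (2 + n₂))) ^ n₁ =
      (X - C (α * (2 + n₂))) ^ m *
        (∏ i ∈ Finset.univ.filter (fun i : Fin n₂ => i.val ≠ 0),
          (X - C (α * m + μ₂ i))) *
        (∏ i ∈ Finset.univ.filter (fun i : Fin n₁ => i.val ≠ 0),
          (X ^ 2 - C (2 * α + α * r₁ + α * n₂ + μ₁ i) * X
            + C (α ^ 2 * r₁ * n₂ + 3 * α * r₁ - r₁ + (3 * α + α * n₂ - 1) * μ₁ i))) *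
        ((X - C (α * m + r₂)) *
            (X ^ 2 - C (2 * α + α * r₁ + α * n₂ + r₁) * X
              + C (α ^ 2 * r₁ * n₂ + 6 * α * r₁ + α * r₁ * n₂ - 2 * r₁))
          - C (m * n₂ * (1 - α) ^ 2) * (X - C (α * r₁ + r₁))) := by
  set R : ℝ[X] := X ^ 2 - C (2 * α + α * r₁ + α * n₂ + r₁) * X
    + C (α ^ 2 * r₁ * n₂ + 6 * α * r₁ + α * r₁ * n₂ - 2 * r₁) with hR
  have hR0 : R ≠ 0 := by
    have h : R.Monic := by
      rw [hR]
      monicity!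
    exact h.ne_zero
  have hW : (X - C (α * (2 + n₂))) * (X - C (α * (2 + n₂) - (1 - α))) *
      (X - C (α * m + r₂)) * R ≠ (0 : ℝ[X]) :=
    mul_ne_zero (mul_ne_zero (mul_ne_zero (X_sub_C_ne_zero _) (X_sub_C_ne_zero _))
      (X_sub_C_ne_zero _)) hR0
  refine eq_of_eval_eq_of_eval_ne_zero hW fun x hx => ?_
  simp only [hR, eval_mul, eval_sub, eval_add, eval_pow, eval_X, eval_C, eval_prod,
    mul_ne_zero_iff] at hx ⊢
  obtain ⟨⟨⟨hc0, ht0⟩, hq0⟩, hRx⟩ := hx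
  obtain ⟨c, hc⟩ : ∃ c, c = x - α * (2 + n₂) := ⟨_, rfl⟩
  obtain ⟨k, hk⟩ : ∃ k, k = (1 - α) ^ 2 / c := ⟨_, rfl⟩
  obtain ⟨t, ht⟩ : ∃ t, t = 1 + (1 - α) / c := ⟨_, rfl⟩
  obtain ⟨s, hs⟩ : ∃ s, s = x - α * r₁ - k * r₁ + (1 - α) / c * (α * r₁) := ⟨_, rfl⟩
  obtain ⟨q, hq⟩ : ∃ q, q = x - (α * m + r₂) := ⟨_, rfl⟩
  rw [← hc] at hc0
  rw [← hq] at hq0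
  have hquad : ∀ y : ℝ, c * (s - t * y) = x ^ 2 - (2 * α + α * r₁ + α * n₂ + y) * x +
      (α ^ 2 * r₁ * n₂ + 3 * α * r₁ - r₁ + (3 * α + α * n₂ - 1) * y) := by
    intro y
    rw [hs, ht, hk]
    field_simp
    rw [hc]
    ring
  have hpR : c * (s - t * r₁) = x ^ 2 - (2 * α + α * r₁ + α * n₂ + r₁) * x +
      (α ^ 2 * r₁ * n₂ + 6 * α * r₁ + α * r₁ * n₂ - 2 * r₁) := by
    rw [hquad]
    ring
  have hp : s - t * r₁ ≠ 0 := by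
    rw [← hpR] at hRx
    exact right_ne_zero_of_mul hRx
  have ht0' : t ≠ 0 := by
    have h : t * c = x - (α * (2 + n₂) - (1 - α)) := by
      rw [ht]
      field_simp
      rw [hc]
      ring
    rw [← h] at ht0
    exact left_ne_zero_of_mul ht0
  have hnr : (n₁ : ℝ) * r₁ = 2 * m := by
    have h := hreg₁.card_mul_eq_two_mul_card_edgeSet
    rw [Fintype.card_fin] at h
    rw [hm] at h
    exact_mod_cast h
  have key := eval_charpoly_Aalpha_rEdgeJoin G₁ G₂ hreg₁ hreg₂ (x := x)
    (by rw [hc, Fintype.card_fin]) hc0 hk ht ht0' hs hp (q := q)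
    (by rw [hm, hq]; ring) hq0 hμ₁ hμ₂
  rw [hm, Fintype.card_fin, Fintype.card_fin, Fin.prod_eq_zero_mul_prod_filter_ne_zero,
    Fin.prod_eq_zero_mul_prod_filter_ne_zero (fun i => x - α * m - μ₂ i), h₁, h₂] at key
  simp_rw [← hquad, ← hpR, ← hc, ← hq]
  have hpow : c ^ n₁ = c * ∏ i : Fin n₁ with i.val ≠ 0, c := by
    rw [← Fin.prod_eq_zero_mul_prod_filter_ne_zero (fun _ : Fin n₁ => c), Finset.prod_const,
      Finset.card_univ, Fintype.card_fin]
  have hfac : c * ((s - t * r₁) * (q - k * m * n₂) - (k * r₁) ^ 2 * n₁ * n₂) =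
      q * (c * (s - t * r₁)) - m * n₂ * (1 - α) ^ 2 * (x - (α * r₁ + r₁)) := by
    have hkc : k * c = (1 - α) ^ 2 := by rw [hk]; field_simp
    have hsp : s - t * r₁ + 2 * k * r₁ = x - (α * r₁ + r₁) := by
      rw [hs, ht, hk]
      field_simp
      ring
    rw [← hsp, ← hkc]
    linear_combination (-c * k ^ 2 * r₁ * n₂) * hnr
  have hprod : ∏ i : Fin n₂ with i.val ≠ 0, (x - (α * m + μ₂ i)) =
      ∏ i : Fin n₂ with i.val ≠ 0, (x - α * m - μ₂ i) :=
    Finset.prod_congr rfl fun i _ => by ring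
  rw [Finset.prod_mul_distrib, ← hfac, hpow, hprod]
  apply mul_right_cancel₀ (mul_ne_zero hp hq0)
  rw [mul_right_comm, key, hq]
  ring

/-- Corollary: the `A_α`-spectrum (as the factorization of the `A_α`-characteristic
polynomial) of the `R`-edge join `G₁⟨e⟩G₂` of an `r₁`-regular graph `G₁` and an
`r₂`-regular graph `G₂`, in the cases `r₁ = 1` and `r₁ ≥ 2`. -/
theorem Aalpha_spectrum_rEdgeJoin_regular
    {n₁ m₁ n₂ r₁ r₂ : ℕ} (G₁ : SimpleGraph (Fin n₁)) (G₂ : SimpleGraph (Fin n₂))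
    (hconn₁ : G₁.Connected) (hconn₂ : G₂.Connected)
    (hreg₁ : G₁.IsRegularOfDegree r₁) (hreg₂ : G₂.IsRegularOfDegree r₂)
    (hm : Fintype.card G₁.edgeSet = m₁)
    (α : ℝ) (hα : α ∈ Set.Icc (0 : ℝ) 1)
    (μ₁ : Fin n₁ → ℝ) (hμ₁ : Antitone μ₁)
    (hμ₁ch : (Aalpha G₁ α).charpoly = ∏ i, (X - C (μ₁ i)))
    (μ₂ : Fin n₂ → ℝ) (hμ₂ : Antitone μ₂)
    (hμ₂ch : (Aalpha G₂ α).charpoly = ∏ i, (X - C (μ₂ i))) :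
    (r₁ = 1 →
      (Aalpha (rEdgeJoin G₁ G₂) α).charpoly =
        (X - C (3 * α - 1)) *
        (∏ i ∈ Finset.univ.filter (fun i : Fin n₂ => i.val ≠ 0),
          (X - C (α + μ₂ i))) *
        ((X - C (α + r₂)) *
            (X ^ 2 - C (3 * α + α * n₂ + 1) * X
              + C (α ^ 2 * n₂ + 6 * α + α * n₂ - 2))
          - C (n₂ * (1 - α) ^ 2) * (X - C (α + 1)))) ∧
    (2 ≤ r₁ →
      (Aalpha (rEdgeJoin G₁ G₂) α).charpoly =
        (X - C (α * (2 + n₂))) ^ (m₁ - n₁) *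
        (∏ i ∈ Finset.univ.filter (fun i : Fin n₂ => i.val ≠ 0),
          (X - C (α * m₁ + μ₂ i))) *
        (∏ i ∈ Finset.univ.filter (fun i : Fin n₁ => i.val ≠ 0),
          (X ^ 2 - C (2 * α + α * r₁ + α * n₂ + μ₁ i) * X
            + C (α ^ 2 * r₁ * n₂ + 3 * α * r₁ - r₁ + (3 * α + α * n₂ - 1) * μ₁ i))) *
        ((X - C (α * m₁ + r₂)) *
            (X ^ 2 - C (2 * α + α * r₁ + α * n₂ + r₁) * X
              + C (α ^ 2 * r₁ * n₂ + 6 * α * r₁ + α * r₁ * n₂ - 2 * r₁))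
          - C (m₁ * n₂ * (1 - α) ^ 2) * (X - C (α * r₁ + r₁)))) := by
  have : NeZero n₁ := ⟨fun h => by subst h; exact hconn₁.nonempty.elim fun i => i.elim0⟩
  have : NeZero n₂ := ⟨fun h => by subst h; exact hconn₂.nonempty.elim fun i => i.elim0⟩
  have h₁ : μ₁ 0 = r₁ := eq_of_antitone_of_charpoly_eq_prod (Aalpha_apply_nonneg G₁ hα)
    (Aalpha_mulVec_one hreg₁ α) hμ₁ hμ₁ch
  have h₂ : μ₂ 0 = r₂ := eq_of_antitone_of_charpoly_eq_prod (Aalpha_apply_nonneg G₂ hα)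
    (Aalpha_mulVec_one hreg₂ α) hμ₂ hμ₂ch
  have hnr : n₁ * r₁ = 2 * m₁ := by
    simpa [hm] using hreg₁.card_mul_eq_two_mul_card_edgeSet
  have hmain := charpoly_Aalpha_rEdgeJoin_mul hreg₁ hreg₂ hμ₁ch hμ₂ch h₁ h₂ hm
  have hY : (X - C (α * (2 + n₂)) : ℝ[X]) ≠ 0 := X_sub_C_ne_zero _
  constructor
  · rintro rfl
    have hn₁ : n₁ = 2 := by
      have h := hconn₁.card_vert_le_card_edgeSet_add_one
      rw [Nat.card_eq_fintype_card, Nat.card_eq_fintype_card, Fintype.card_fin] at h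
      have := NeZero.ne n₁
      omega
    subst hn₁
    obtain rfl : m₁ = 1 := by omega
    have hμ1 : μ₁ 1 = 2 * α - 1 := by
      have hd : ∀ i, Aalpha G₁ α i i = α := fun i => by
        simp [Aalpha_apply, hreg₁.degree_eq]
      rw [charpoly_fin_two, trace_fin_two, hd, hd, Fin.prod_univ_two, h₁] at hμ₁ch
      have h0 := congrArg (eval 0) hμ₁ch
      have h1 := congrArg (eval 1) hμ₁ch
      simp only [eval_add, eval_sub, eval_mul, eval_pow, eval_X, eval_C, Nat.cast_one] at h0 h1
      linear_combination h1 - h0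
    have hfilter : (Finset.univ.filter fun i : Fin 2 => i.val ≠ 0) = {1} := by
      ext i
      fin_cases i <;> simp
    rw [hfilter, Finset.prod_singleton, hμ1] at hmain
    apply mul_right_cancel₀ (pow_ne_zero 2 hY)
    rw [hmain]
    have hq : (X ^ 2 - C (2 * α + α * (1 : ℕ) + α * n₂ + (2 * α - 1)) * X
        + C (α ^ 2 * (1 : ℕ) * n₂ + 3 * α * (1 : ℕ) - (1 : ℕ)
          + (3 * α + α * n₂ - 1) * (2 * α - 1)) : ℝ[X]) =
        (X - C (3 * α - 1)) * (X - C (α * (2 + n₂))) := by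
      simp only [map_add, map_sub, map_mul, map_pow, map_ofNat, map_one, Nat.cast_one]
      ring
    rw [hq]
    simp only [map_add, map_sub, map_mul, map_pow, map_ofNat, map_one, Nat.cast_one, mul_one,
      one_mul]
    ring
  · intro hr
    have hle : n₁ ≤ m₁ := by nlinarith
    apply mul_right_cancel₀ (pow_ne_zero n₁ hY)
    rw [hmain]
    nth_rewrite 1 [← Nat.sub_add_cancel hle]
    rw [pow_add]
    ring
end
end
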